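/- Let I be a ROS-UET instance on a network G=(V,E,c,v*) such that (V,E) is a complete graph, c satisfies the triangle inequality, and every vertex other than the depot contains at least one job. Let S be a feasible schedule for I of minimum makespan L, and let (R^q)_{q=1}^m be routes compatible with S, each of length at most L. Then for every machine M_q and every vertex v ∈ V, the total length of the stays of R^q in v satisfies Σ_{k : v_k = v} (b_k − a_k) ≤ n_v + m − 1, where n_v is the number of jobs located in v. -/

import Mathlib

/-- A network: a connected simple graph with positive integer travel times
and a distinguished depot vertex. -/
structure Network (V : Type*) where
  G : SimpleGraph V
  conn : G.Connected
  c : V → V → ℕ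
  csymm : ∀ u v : V, c u v = c v u
  cpos : ∀ u v : V, G.Adj u v → 0 < c u v
  depot : V

/-- A route with `s` stays; stay `k` (for `k < s`) is `(a k, v k, b k)`. -/
structure Route (V : Type*) where
  s : ℕ
  a : ℕ → ℕ
  v : ℕ → V
  b : ℕ → ℕ

/-- The length of a route: the end of its last stay. -/
def Route.length {V : Type*} (R : Route V) : ℕ := R.b (R.s - 1)

/-- `R` is a valid route in the network `N`. -/
def IsRoute {V : Type*} (N : Network V) (R : Route V) : Prop :=
  0 < R.s ∧ R.v 0 = N.depot ∧ R.v (R.s - 1) = N.depot ∧ R.a 0 = 0 ∧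
    (∀ k < R.s, R.a k ≤ R.b k) ∧
    ∀ k, k + 1 < R.s →
      N.G.Adj (R.v k) (R.v (k + 1)) ∧
      R.a (k + 1) = R.b k + N.c (R.v k) (R.v (k + 1))

/-- Routes `R` (one per machine) are compatible with the (unit execution time)
schedule `S`: each machine stays at the location of each job while processing it. -/
def Compatible {V : Type*} {n m : ℕ} (loc : Fin n → V)
    (S : Fin n → Fin m → ℕ) (R : Fin m → Route V) : Prop :=
  ∀ (i : Fin n) (q : Fin m), ∃ k < (R q).s,
    (R q).v k = loc i ∧ (R q).a k ≤ S i q ∧ S i q + 1 ≤ (R q).b k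

/-- A schedule for a ROS-UET instance is feasible. -/
def Feasible {V : Type*} {n m : ℕ} (N : Network V) (loc : Fin n → V)
    (S : Fin n → Fin m → ℕ) : Prop :=
  (∀ (i j : Fin n) (q : Fin m), i ≠ j → S i q ≠ S j q) ∧
  (∀ (i : Fin n) (q r : Fin m), q ≠ r → S i q ≠ S i r) ∧
  ∃ R : Fin m → Route V, (∀ q, IsRoute N (R q)) ∧ Compatible loc S R

/-- The makespan of a schedule: the least `L` such that there are compatible
routes, each of length at most `L`. -/
noncomputable def makespan {V : Type*} {n m : ℕ} (N : Network V) (loc : Fin n → V)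
    (S : Fin n → Fin m → ℕ) : ℕ :=
  sInf {L | ∃ R : Fin m → Route V, (∀ q, IsRoute N (R q)) ∧
    Compatible loc S R ∧ ∀ q, Route.length (R q) ≤ L}

/-- The total travel time of a walk in a graph with travel times `c`. -/
def walkWeight {V : Type*} {G : SimpleGraph V} (c : V → V → ℕ) {u w : V}
    (p : G.Walk u w) : ℕ :=
  (p.darts.map fun d => c d.toProd.1 d.toProd.2).sum

/-!
Let every machine follow the route `R` of a single one, leaving each vertex as soon as the jobs
assigned to that stay are done, with machine `r` running `r` time units late. The distinct delays
keep any two machines apart on every job, so this is a feasible schedule, of makespan at most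
`D + n + m - 1`, where `D` is the total travel time of `R`. If `R` is not longer than an optimal
makespan, then comparing lengths leaves at most `n + m - 1` for all its stays together; those
outside `v` already take at least `n - n_v`.
-/

section

open Finset

/-- The position of job `i` when the jobs are processed stay by stay, `f j` being the stay during
which job `j` is processed; jobs of the same stay are ordered by their index. -/
def processingRank {n : ℕ} (f : Fin n → ℕ) (i : Fin n) : ℕ := (Tuple.sort f).symm i

lemma processingRank_injective {n : ℕ} (f : Fin n → ℕ) :
    Function.Injective (processingRank f) :=
  Fin.val_injective.comp (Tuple.sort f).symm.injective

lemma processingRank_lt_card_iff {n : ℕ} (f : Fin n → ℕ) (i : Fin n) (k : ℕ) :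
    processingRank f i < #{j | f j < k} ↔ f i < k := by
  obtain _ | k := k
  · simp
  have h_card : #{j | f j < k + 1} = #{j | (f ∘ Tuple.sort f) j ≤ k} :=
    (card_equiv (Tuple.sort f) fun j => by simp).symm
  rw [h_card, processingRank,
    Tuple.lt_card_le_iff_apply_le_of_monotone (Tuple.monotone_sort f)]
  simp

variable {V : Type*}

/-- The time spent travelling along `R` before its stay `k`. -/
def Route.travelTime (c : V → V → ℕ) (R : Route V) (k : ℕ) : ℕ :=
  ∑ l ∈ range k, c (R.v l) (R.v (l + 1))

lemma Route.travelTime_succ (c : V → V → ℕ) (R : Route V) (k : ℕ) :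
    R.travelTime c (k + 1) = R.travelTime c k + c (R.v k) (R.v (k + 1)) :=
  sum_range_succ _ _

lemma Route.travelTime_mono (c : V → V → ℕ) (R : Route V) : Monotone (R.travelTime c) :=
  monotone_nat_of_le_succ fun k => by simp [travelTime_succ]

/-- A machine on route `R` can process every unit-time job `i` from time `t i` on: this is
compatibility for a single machine. -/
def Route.Processes {ι : Type*} (R : Route V) (loc : ι → V) (t : ι → ℕ) : Prop :=
  ∀ i, ∃ k < R.s, R.v k = loc i ∧ R.a k ≤ t i ∧ t i + 1 ≤ R.b k

lemma Route.Processes.card_le_sum_stays {ι : Type*} [Fintype ι] {R : Route V} {loc : ι → V}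
    {t : ι → ℕ} (h : R.Processes loc t) (ht : Function.Injective t) (p : V → Prop)
    [DecidablePred p] :
    #{i | p (loc i)} ≤ ∑ k ∈ range R.s with p (R.v k), (R.b k - R.a k) := by
  have hmaps : Set.MapsTo t ({i | p (loc i)} : Finset ι)
      ({k ∈ range R.s | p (R.v k)}.biUnion fun k => Ico (R.a k) (R.b k)) := by
    intro i hi
    obtain ⟨k, hk, hloc, ha, hb⟩ := h i
    simp only [coe_filter, mem_univ, true_and, Set.mem_ofPred_eq] at hi
    simp only [mem_coe, mem_biUnion, mem_filter, mem_range, mem_Ico]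
    exact ⟨k, ⟨hk, hloc ▸ hi⟩, ha, hb⟩
  calc #{i | p (loc i)}
      ≤ #({k ∈ range R.s | p (R.v k)}.biUnion fun k => Ico (R.a k) (R.b k)) :=
        card_le_card_of_injOn t hmaps ht.injOn
    _ ≤ ∑ k ∈ range R.s with p (R.v k), #(Ico (R.a k) (R.b k)) := card_biUnion_le
    _ = ∑ k ∈ range R.s with p (R.v k), (R.b k - R.a k) := by simp only [Nat.card_Ico]

lemma IsRoute.departure_eq {N : Network V} {R : Route V} (hR : IsRoute N R) {k : ℕ}
    (hk : k < R.s) :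
    R.b k = ∑ l ∈ range (k + 1), (R.b l - R.a l) + R.travelTime N.c k := by
  obtain ⟨-, -, -, h_start, h_stay, h_step⟩ := hR
  induction k with
  | zero => simp [Route.travelTime, h_start]
  | succ k ih =>
    have h_arrival := (h_step k hk).2
    have h_departure := ih (by lia)
    have h_le := h_stay (k + 1) hk
    rw [sum_range_succ, Route.travelTime_succ]
    lia

lemma IsRoute.length_eq {N : Network V} {R : Route V} (hR : IsRoute N R) :
    R.length = ∑ k ∈ range R.s, (R.b k - R.a k) + R.travelTime N.c (R.s - 1) := by
  have h_pos : 0 < R.s := hR.1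
  have h_departure := hR.departure_eq (Nat.sub_one_lt_of_lt h_pos)
  rwa [Nat.sub_add_cancel h_pos] at h_departure

variable {n : ℕ}

/-- The route through the vertices of `R` that stays just long enough to process, during stay `k`,
the jobs `i` with `f i = k`, all delayed by `r` time units. The delay is spent in the first stay,
which therefore starts at time `0`. -/
def Route.tighten (c : V → V → ℕ) (R : Route V) (f : Fin n → ℕ) (r : ℕ) : Route V where
  s := R.s
  a k := if k = 0 then 0 else R.travelTime c k + #{i | f i < k} + r
  v := R.v
  b k := R.travelTime c k + #{i | f i < k + 1} + r

/-- The schedule in which machine `r` follows `R.tighten c f r`. -/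
def Route.tightSchedule (c : V → V → ℕ) (R : Route V) (f : Fin n → ℕ) (m : ℕ) (i : Fin n)
    (r : Fin m) : ℕ :=
  R.travelTime c (f i) + processingRank f i + r

lemma Route.tighten_a_le (c : V → V → ℕ) (R : Route V) (f : Fin n → ℕ) (r k : ℕ) :
    (R.tighten c f r).a k ≤ R.travelTime c k + #{i | f i < k} + r := by
  simp only [tighten]
  split_ifs <;> lia

lemma IsRoute.tighten {N : Network V} {R : Route V} (hR : IsRoute N R) (f : Fin n → ℕ)
    (r : ℕ) : IsRoute N (R.tighten N.c f r) := by
  obtain ⟨h_pos, h_first, h_last, -, -, h_step⟩ := hR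
  refine ⟨h_pos, h_first, h_last, rfl, fun k _ => ?_, fun k hk => ⟨(h_step k hk).1, ?_⟩⟩
  · have h_card : #{i | f i < k} ≤ #{i | f i < k + 1} := by
      gcongr
      exact Nat.le_succ k
    refine (Route.tighten_a_le N.c R f r k).trans ?_
    simp only [Route.tighten]
    gcongr
  · simp only [Route.tighten, Nat.succ_ne_zero, if_false, Route.travelTime_succ]
    lia

lemma Route.length_tighten (c : V → V → ℕ) {R : Route V} {f : Fin n → ℕ} (hf : ∀ i, f i < R.s)
    (r : ℕ) : (R.tighten c f r).length = R.travelTime c (R.s - 1) + n + r := by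
  have h_all : #{i | f i < R.s - 1 + 1} = n := by
    rw [filter_true_of_mem fun i _ => (hf i).trans_le (by lia), card_fin]
  simp only [Route.length, tighten, h_all]

lemma Route.compatible_tighten (c : V → V → ℕ) {R : Route V} {loc : Fin n → V} {f : Fin n → ℕ}
    (hf : ∀ i, f i < R.s) (hloc : ∀ i, R.v (f i) = loc i) (m : ℕ) :
    Compatible loc (R.tightSchedule c f m) fun r => R.tighten c f r := by
  intro i r
  have h_after : #{j | f j < f i} ≤ processingRank f i :=
    not_lt.mp ((processingRank_lt_card_iff f i (f i)).not.mpr (lt_irrefl _))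
  have h_before : processingRank f i < #{j | f j < f i + 1} :=
    (processingRank_lt_card_iff f i (f i + 1)).mpr (Nat.lt_succ_self _)
  refine ⟨f i, hf i, hloc i, (tighten_a_le c R f r (f i)).trans ?_, ?_⟩ <;>
    simp only [tighten, tightSchedule] <;> lia

lemma Route.tightSchedule_injective (c : V → V → ℕ) (R : Route V) (f : Fin n → ℕ) {m : ℕ}
    (r : Fin m) : Function.Injective fun i => R.tightSchedule c f m i r := by
  have h_le_of_rank_le {i j : Fin n} (h : processingRank f i ≤ processingRank f j) :
      f i ≤ f j :=
    Nat.lt_succ_iff.mp <| (processingRank_lt_card_iff f i _).mp <|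
      h.trans_lt ((processingRank_lt_card_iff f j _).mpr (Nat.lt_succ_self _))
  intro i j hij
  simp only [tightSchedule] at hij
  apply processingRank_injective f
  rcases le_total (processingRank f i) (processingRank f j) with h | h <;>
  · have := R.travelTime_mono c (h_le_of_rank_le h)
    lia

lemma IsRoute.exists_feasible_makespan_le {N : Network V} {R : Route V}
    {loc : Fin n → V} (hR : IsRoute N R) (h_visits : ∀ i, ∃ k < R.s, R.v k = loc i) (m : ℕ) :
    ∃ S : Fin n → Fin m → ℕ, Feasible N loc S ∧
      makespan N loc S ≤ R.travelTime N.c (R.s - 1) + n + m - 1 := by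
  choose f hf hloc using h_visits
  have h_routes (r : Fin m) : IsRoute N (R.tighten N.c f r) := hR.tighten f r
  have h_compat := Route.compatible_tighten N.c hf hloc m
  refine ⟨R.tightSchedule N.c f m,
    ⟨fun i j r hij => ?_, fun i q r hqr => ?_, _, h_routes, h_compat⟩,
    Nat.sInf_le ⟨_, h_routes, h_compat, fun r => ?_⟩⟩
  · exact (R.tightSchedule_injective N.c f r).ne hij
  · simpa [Route.tightSchedule, Fin.val_inj] using hqr
  · rw [Route.length_tighten N.c hf]
    lia

theorem statement5_general [DecidableEq V] {m : ℕ} (N : Network V)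
    (loc : Fin n → V) (L : ℕ)
    (hL : ∀ S : Fin n → Fin m → ℕ, Feasible N loc S → L ≤ makespan N loc S)
    (R : Route V) (hR : IsRoute N R) (t : Fin n → ℕ) (ht : Function.Injective t)
    (hproc : R.Processes loc t) (hlen : R.length ≤ L) (v : V) :
    ∑ k ∈ range R.s with R.v k = v, (R.b k - R.a k) ≤ #{i | loc i = v} + m - 1 := by
  obtain ⟨S, hS, h_makespan⟩ := hR.exists_feasible_makespan_le
    (fun i => (hproc i).imp fun _ h => ⟨h.1, h.2.1⟩) m
  have h_total : ∑ k ∈ range R.s, (R.b k - R.a k) ≤ n + m - 1 := by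
    have h_length := hR.length_eq
    have h_opt := hL S hS
    lia
  have h_elsewhere : #{i | ¬loc i = v} ≤ ∑ k ∈ range R.s with ¬R.v k = v, (R.b k - R.a k) :=
    hproc.card_le_sum_stays ht (¬ · = v)
  have h_stays := sum_filter_add_sum_filter_not (range R.s) (R.v · = v) fun k => R.b k - R.a k
  have h_jobs := card_filter_add_card_filter_not (s := univ) (loc · = v)
  rw [card_fin] at h_jobs
  lia

end

/-- For a ROS-UET instance on a complete network whose travel
times satisfy the triangle inequality and in which every non-depot vertex
contains at least one job: if `S` is a feasible schedule of minimum makespan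
`L` and `(R q)` are routes compatible with `S`, each of length at most `L`,
then for every machine `q` and vertex `v`, the total length of the stays of
`R q` in `v` is at most `n_v + m - 1`. -/
theorem statement5 {V : Type*} [Fintype V] [DecidableEq V] {n m : ℕ}
    (N : Network V)
    (hcomplete : N.G = ⊤)
    (htri : ∀ u v w : V, u ≠ v → v ≠ w → u ≠ w → N.c u w ≤ N.c u v + N.c v w)
    (loc : Fin n → V)
    (hjobs : ∀ v : V, v ≠ N.depot → ∃ i : Fin n, loc i = v)
    (S : Fin n → Fin m → ℕ) (L : ℕ)
    (hfeas : Feasible N loc S)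
    (hL : L = makespan N loc S)
    (hopt : ∀ S' : Fin n → Fin m → ℕ, Feasible N loc S' →
      makespan N loc S ≤ makespan N loc S')
    (R : Fin m → Route V)
    (hroutes : ∀ q, IsRoute N (R q))
    (hcompat : Compatible loc S R)
    (hlen : ∀ q, Route.length (R q) ≤ L) :
    ∀ (q : Fin m) (v : V),
      ∑ k ∈ (Finset.range (R q).s).filter (fun k => (R q).v k = v),
        ((R q).b k - (R q).a k) ≤
      (Finset.univ.filter (fun i : Fin n => loc i = v)).card + m - 1 :=
  fun q => statement5_general N loc L (fun S' hS' => hL.trans_le (hopt S' hS')) (R q) (hroutes q)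
    (S · q) (fun _ _ => not_imp_not.mp (hfeas.1 _ _ q)) (hcompat · q) (hlen q)
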